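/- Let 0 < α < 1 and let ψ be a C¹ increasing function with ψ' never zero. The function u(x,t) = cos(πx) · E_α((1−π²)(ψ(t)−ψ(a))^α) satisfies the time-fractional diffusion equation ^C D^{α,ψ}_{a+} u(x,t) = ∂²u/∂x²(x,t) + u(x,t) together with the initial condition u(x,a) = cos(πx). -/

import Mathlib

open Real

noncomputable def psiInt (α : ℝ) (ψ : ℝ → ℝ) (a : ℝ) (f : ℝ → ℝ) (t : ℝ) : ℝ :=
  (1 / Real.Gamma α) * ∫ τ in a..t, deriv ψ τ * (ψ t - ψ τ) ^ (α - 1) * f τ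

noncomputable def caputo (α : ℝ) (ψ : ℝ → ℝ) (a : ℝ) (f : ℝ → ℝ) : ℝ → ℝ :=
  psiInt (1 - α) ψ a (fun τ => deriv f τ / deriv ψ τ)

noncomputable def ML (α z : ℝ) : ℝ := ∑' m : ℕ, z ^ m / Real.Gamma (m * α + 1)
lemma gamma_lower (R x : ℝ) (hR : 0 < R) (hx : 0 ≤ x) : Real.exp (-R) * R ^ x ≤ Real.Gamma (x + 1) := by
  rw [Real.Gamma_eq_integral (by linarith)]
  have hint := Real.GammaIntegral_convergent (s := x + 1) (by linarith)
  have h1 : ∫ t in Set.Ioi R, Real.exp (-t) * R ^ x ≤ ∫ t in Set.Ioi R, Real.exp (-t) * t ^ (x + 1 - 1) := by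
    apply MeasureTheory.setIntegral_mono_on
    · exact (integrableOn_exp_neg_Ioi R).mul_const _
    · exact hint.mono_set (Set.Ioi_subset_Ioi hR.le)
    · exact measurableSet_Ioi
    · intro t ht
      have : R < t := ht
      have h2 : R ^ x ≤ t ^ (x + 1 - 1) := by
        rw [add_sub_cancel_right]; exact Real.rpow_le_rpow hR.le this.le hx
      gcongr
  have h3 : ∫ t in Set.Ioi R, Real.exp (-t) * R ^ x = Real.exp (-R) * R ^ x := by
    rw [MeasureTheory.integral_mul_const, integral_exp_neg_Ioi]
  rw [← h3]
  refine h1.trans (MeasureTheory.setIntegral_mono_set hint ?_ ?_)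
  · filter_upwards [MeasureTheory.ae_restrict_mem measurableSet_Ioi] with t ht
    have : 0 < t := ht
    simp only [Pi.zero_apply]; positivity
  · exact (Set.Ioi_subset_Ioi hR.le).eventuallyLE

lemma ml_summable (α z : ℝ) (hα : 0 < α) :
    Summable (fun m : ℕ => z ^ m / Real.Gamma (m * α + 1)) := by
  set R : ℝ := (2 * (|z| + 1)) ^ (1 / α) with hR
  have hz := abs_nonneg z
  have hRpos : 0 < R := by positivity
  have hRa : R ^ α = 2 * (|z| + 1) := by
    rw [hR, ← Real.rpow_mul (by positivity)]; field_simp; simp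
  have hs : Summable (fun m : ℕ => Real.exp R * (1 / 2 : ℝ) ^ m) :=
    summable_geometric_two.mul_left _
  refine Summable.of_norm_bounded hs ?_
  intro m
  have hg := gamma_lower R (m * α) hRpos (by positivity)
  have hGpos : 0 < Real.Gamma (m * α + 1) := Real.Gamma_pos_of_pos (by positivity)
  rw [norm_div, norm_pow, Real.norm_eq_abs, Real.norm_of_nonneg hGpos.le, div_le_iff₀ hGpos]
  have h4 : R ^ (m * α) = (2 * (|z| + 1)) ^ m := by
    rw [mul_comm, Real.rpow_mul hRpos.le, hRa, Real.rpow_natCast]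
  rw [h4] at hg
  calc |z| ^ m ≤ (|z| + 1) ^ m := by gcongr; linarith
    _ = Real.exp R * (1 / 2) ^ m * (Real.exp (-R) * (2 * (|z| + 1)) ^ m) := by
        rw [mul_pow, Real.exp_neg]; field_simp; rw [← mul_pow]; norm_num
    _ ≤ _ := by gcongr

lemma ml_hasDerivAt (α z : ℝ) (hα : 0 < α) :
    HasDerivAt (ML α) (∑' m : ℕ, (m * z ^ (m - 1)) / Real.Gamma (m * α + 1)) z := by
  have hz := abs_nonneg z
  refine hasDerivAt_tsum_of_isPreconnected (u := fun m : ℕ => (2 * (|z| + 1)) ^ m / Real.Gamma (m * α + 1))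
    (t := Metric.ball 0 (|z| + 1)) (y₀ := 0)
    (g := fun (m : ℕ) (y : ℝ) => y ^ m / Real.Gamma (m * α + 1))
    (g' := fun (m : ℕ) (y : ℝ) => (m * y ^ (m - 1)) / Real.Gamma (m * α + 1))
    (ml_summable α _ hα) Metric.isOpen_ball (convex_ball _ _).isPreconnected ?_ ?_ ?_ ?_ ?_
  · intro m y _
    exact (hasDerivAt_pow m y).div_const _
  · intro m y hy
    have hGpos : 0 < Real.Gamma (m * α + 1) := Real.Gamma_pos_of_pos (by positivity)
    rw [norm_div, norm_mul, norm_pow, Real.norm_of_nonneg hGpos.le, Real.norm_natCast]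
    have hy' : ‖y‖ ≤ |z| + 1 := by simpa using (Metric.mem_ball.1 hy).le
    rw [mul_pow]
    have h1 : (m : ℝ) ≤ 2 ^ m := by exact_mod_cast Nat.lt_two_pow_self.le
    have h2 : ‖y‖ ^ (m - 1) ≤ (|z| + 1) ^ m :=
      (pow_le_pow_left₀ (norm_nonneg _) hy' _).trans
        (pow_le_pow_right₀ (by linarith) (Nat.sub_le _ _))
    gcongr
  · simp; positivity
  · exact ml_summable α 0 hα
  · simp

lemma beta_scaled (T s t : ℝ) (hT : 0 < T) (hs : 0 < s) (ht : 0 < t) :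
    ∫ x in (0:ℝ)..T, x ^ (s - 1) * (T - x) ^ (t - 1) =
      T ^ (s + t - 1) * (Real.Gamma s * Real.Gamma t / Real.Gamma (s + t)) := by
  have h := Complex.betaIntegral_scaled s t hT
  have hb := Complex.Gamma_mul_Gamma_eq_betaIntegral (s := s) (t := t) (by simpa) (by simpa)
  have hne : Complex.Gamma ((s:ℂ) + t) ≠ 0 := by
    rw [← Complex.ofReal_add, Complex.Gamma_ofReal]
    exact_mod_cast (Real.Gamma_pos_of_pos (by positivity)).ne'
  have hb' : Complex.betaIntegral s t = Complex.Gamma s * Complex.Gamma t / Complex.Gamma (s + t) := by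
    rw [hb]; field_simp
  rw [hb'] at h
  apply Complex.ofReal_injective
  rw [← intervalIntegral.integral_ofReal]
  have e : ∀ x ∈ Set.uIcc 0 T, (((x ^ (s - 1) * (T - x) ^ (t - 1) : ℝ)) : ℂ) =
      (x:ℂ) ^ ((s:ℂ) - 1) * ((T:ℂ) - x) ^ ((t:ℂ) - 1) := by
    intro x hx
    rw [Set.uIcc_of_le hT.le] at hx
    rw [Complex.ofReal_mul, Complex.ofReal_cpow hx.1, Complex.ofReal_cpow (by linarith [hx.2])]
    push_cast; rfl
  rw [intervalIntegral.integral_congr e, h, Complex.ofReal_mul, Complex.ofReal_cpow hT.le]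
  push_cast [← Complex.Gamma_ofReal]
  rfl

noncomputable def mlG (α L w : ℝ) : ℝ :=
  ∑' k : ℕ, L ^ (k + 1) * w ^ ((k + 1) * α - 1) / Real.Gamma ((k + 1) * α)

lemma mlF_hasDerivAt (α L w : ℝ) (hα : 0 < α) (hw : 0 < w) :
    HasDerivAt (fun w => ML α (L * w ^ α)) (mlG α L w) w := by
  have h1 : HasDerivAt (fun w : ℝ => L * w ^ α) (L * (α * w ^ (α - 1))) w :=
    (Real.hasDerivAt_rpow_const (Or.inl hw.ne')).const_mul L
  have h2 := (ml_hasDerivAt α (L * w ^ α) hα).comp w h1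
  refine h2.congr_deriv ?_
  have hshift : ∀ f : ℕ → ℝ, f 0 = 0 → ∑' m, f m = ∑' k, f (k + 1) := by
    intro f h0
    by_cases hf : Summable f
    · rw [hf.tsum_eq_zero_add, h0, zero_add]
    · rw [tsum_eq_zero_of_not_summable hf,
        tsum_eq_zero_of_not_summable (fun h => hf ((summable_nat_add_iff 1).1 h))]
  rw [← tsum_mul_right, hshift _ (by simp), mlG]
  congr 1
  funext k
  have hk : (0:ℝ) < ((k:ℝ) + 1) * α := by positivity
  have hG := Real.Gamma_pos_of_pos hk
  have e : w ^ (((k:ℝ) + 1) * α - 1) = (w ^ α) ^ k * w ^ (α - 1) := by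
    rw [← Real.rpow_natCast, ← Real.rpow_mul hw.le, ← Real.rpow_add hw]
    congr 1; ring
  push_cast
  rw [Real.Gamma_add_one hk.ne', e, mul_pow]
  field_simp
  try ring

lemma ml_integral (α L T : ℝ) (hα : 0 < α) (hα1 : α < 1) (hT : 0 < T) :
    ∫ w in Set.Ioo 0 T, (T - w) ^ (1 - α - 1) * mlG α L w =
      Real.Gamma (1 - α) * (L * ML α (L * T ^ α)) := by
  have hG1 : 0 < Real.Gamma (1 - α) := Real.Gamma_pos_of_pos (by linarith)
  -- the basic terms
  have hb : ∀ k : ℕ, ∫ w in Set.Ioo 0 T, w ^ (((k:ℝ) + 1) * α - 1) * (T - w) ^ (1 - α - 1) =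
      (T ^ α) ^ k * (Real.Gamma (((k:ℝ) + 1) * α) * Real.Gamma (1 - α) / Real.Gamma (k * α + 1)) := by
    intro k
    have h := beta_scaled T (((k:ℝ) + 1) * α) (1 - α) hT (by positivity) (by linarith)
    rw [intervalIntegral.integral_of_le hT.le, MeasureTheory.integral_Ioc_eq_integral_Ioo] at h
    rw [h, ← Real.rpow_natCast, ← Real.rpow_mul hT.le]
    congr 2
    · ring
    · congr 1; ring
  have hGk : ∀ k : ℕ, 0 < Real.Gamma (((k:ℝ) + 1) * α) := fun k =>
    Real.Gamma_pos_of_pos (by positivity)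
  have hGk1 : ∀ k : ℕ, 0 < Real.Gamma ((k:ℝ) * α + 1) := fun k =>
    Real.Gamma_pos_of_pos (by positivity)
  have hTa : 0 < T ^ α := by positivity
  have hbi : ∀ k : ℕ, MeasureTheory.IntegrableOn
      (fun w : ℝ => w ^ (((k:ℝ) + 1) * α - 1) * (T - w) ^ (1 - α - 1)) (Set.Ioo 0 T) := by
    intro k
    by_contra hcon
    have := MeasureTheory.integral_undef hcon
    rw [hb k] at this
    have h1 := hGk k
    have h2 := hGk1 k
    have : 0 < (T ^ α) ^ k * (Real.Gamma (((k:ℝ) + 1) * α) * Real.Gamma (1 - α) / Real.Gamma (k * α + 1)) := by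
      positivity
    linarith
  let F : ℕ → ℝ → ℝ := fun k w => (L ^ (k + 1) / Real.Gamma (((k:ℝ) + 1) * α)) *
    (w ^ (((k:ℝ) + 1) * α - 1) * (T - w) ^ (1 - α - 1))
  have hFi : ∀ k, MeasureTheory.Integrable (F k) (MeasureTheory.volume.restrict (Set.Ioo 0 T)) :=
    fun k => (hbi k).const_mul _
  have hFI : ∀ k, ∫ w in Set.Ioo 0 T, F k w =
      (Real.Gamma (1 - α) * L) * ((L * T ^ α) ^ k / Real.Gamma (k * α + 1)) := by
    intro k
    have h1 := hGk k
    have h2 := hGk1 k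
    simp only [F]
    rw [MeasureTheory.integral_const_mul, hb k, mul_pow]
    field_simp
    ring
  have hFn : ∀ k, ∫ w in Set.Ioo 0 T, ‖F k w‖ =
      (Real.Gamma (1 - α) * |L|) * ((|L| * T ^ α) ^ k / Real.Gamma (k * α + 1)) := by
    intro k
    have h1 := hGk k
    have h2 := hGk1 k
    have : ∫ w in Set.Ioo 0 T, ‖F k w‖ = ∫ w in Set.Ioo 0 T,
        (|L| ^ (k + 1) / Real.Gamma (((k:ℝ) + 1) * α)) *
          (w ^ (((k:ℝ) + 1) * α - 1) * (T - w) ^ (1 - α - 1)) := by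
      apply MeasureTheory.setIntegral_congr_fun measurableSet_Ioo
      intro w hw
      have hw0 : 0 < w := hw.1
      have hw1 : 0 < T - w := sub_pos.2 hw.2
      have hp : 0 ≤ w ^ (((k:ℝ) + 1) * α - 1) * (T - w) ^ (1 - α - 1) := by positivity
      simp only [F]
      rw [norm_mul, norm_div, norm_pow, Real.norm_of_nonneg h1.le, Real.norm_of_nonneg hp,
        Real.norm_eq_abs]
    rw [this, MeasureTheory.integral_const_mul, hb k, mul_pow]
    field_simp
    ring
  have hs : Summable (fun k => ∫ w in Set.Ioo 0 T, ‖F k w‖) := by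
    simp_rw [hFn]
    exact (ml_summable α _ hα).mul_left _
  have hsum := (MeasureTheory.hasSum_integral_of_summable_integral_norm hFi hs).tsum_eq
  simp_rw [hFI] at hsum
  rw [tsum_mul_left] at hsum
  rw [← mul_assoc, ML, hsum]
  apply MeasureTheory.setIntegral_congr_fun measurableSet_Ioo
  intro w _
  simp only [F, mlG]
  rw [← tsum_mul_left]
  congr 1
  funext k
  ring

theorem stmt8 (a : ℝ) (ψ : ℝ → ℝ) (hψ : ContDiff ℝ 1 ψ)
    (hmono : StrictMono ψ) (hψ' : ∀ x, deriv ψ x ≠ 0)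
    (α : ℝ) (hα : 0 < α) (hα1 : α < 1)
    (u : ℝ → ℝ → ℝ)
    (hu : ∀ x t, u x t = Real.cos (π * x) * ML α ((1 - π ^ 2) * (ψ t - ψ a) ^ α)) :
    (∀ x t, a < t →
        caputo α ψ a (fun s => u x s) t =
          deriv (deriv (fun y => u y t)) x + u x t) ∧
      ∀ x, u x a = Real.cos (π * x) := by
  have hdψ : Differentiable ℝ ψ := hψ.differentiable one_ne_zero
  have hpos : ∀ x, 0 < deriv ψ x := fun x =>
    lt_of_le_of_ne (hmono.monotone.deriv_nonneg) (hψ' x).symm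
  refine ⟨?_, ?_⟩
  · intro x t hat
    set L : ℝ := 1 - π ^ 2 with hL
    set T : ℝ := ψ t - ψ a with hT
    have hTpos : 0 < T := sub_pos.2 (hmono hat)
    have hG1 : 0 < Real.Gamma (1 - α) := Real.Gamma_pos_of_pos (by linarith)
    have himg : (fun s => ψ s - ψ a) '' Set.Ioo a t = Set.Ioo 0 T := by
      apply Set.Subset.antisymm
      · rintro _ ⟨s, hs, rfl⟩
        exact ⟨sub_pos.2 (hmono hs.1), sub_lt_sub_right (hmono hs.2) _⟩
      · have := intermediate_value_Ioo hat.le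
          (f := fun s => ψ s - ψ a) (hψ.continuous.sub continuous_const).continuousOn
        simpa [hT] using this
    have hcv := MeasureTheory.integral_image_eq_integral_abs_deriv_smul
      (s := Set.Ioo a t) (f := fun s => ψ s - ψ a) (f' := deriv ψ) measurableSet_Ioo
      (fun s _ => ((hdψ s).hasDerivAt.sub_const (ψ a)).hasDerivWithinAt)
      (fun s _ r _ h => hmono.injective (sub_left_injective h))
      (fun w => (T - w) ^ (1 - α - 1) * mlG α L w)
    rw [himg, ml_integral α L T hα hα1 hTpos] at hcv
    have hcap : caputo α ψ a (fun s => u x s) t = L * u x t := by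
      rw [caputo, psiInt, intervalIntegral.integral_of_le hat.le,
        MeasureTheory.integral_Ioc_eq_integral_Ioo]
      have : ∫ τ in Set.Ioo a t, deriv ψ τ * (ψ t - ψ τ) ^ (1 - α - 1) *
            (deriv (fun s => u x s) τ / deriv ψ τ) =
          ∫ τ in Set.Ioo a t, Real.cos (π * x) * (|deriv ψ τ| •
            ((T - (ψ τ - ψ a)) ^ (1 - α - 1) * mlG α L (ψ τ - ψ a))) := by
        apply MeasureTheory.setIntegral_congr_fun measurableSet_Ioo
        intro τ hτ
        have hw : 0 < ψ τ - ψ a := sub_pos.2 (hmono hτ.1)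
        have hd : HasDerivAt (fun s => u x s)
            (Real.cos (π * x) * (mlG α L (ψ τ - ψ a) * deriv ψ τ)) τ := by
          have h1 := ((mlF_hasDerivAt α L (ψ τ - ψ a) hα hw).comp τ
            ((hdψ τ).hasDerivAt.sub_const (ψ a))).const_mul (Real.cos (π * x))
          refine h1.congr_of_eventuallyEq (Filter.Eventually.of_forall fun s => ?_)
          exact hu x s
        have e : T - (ψ τ - ψ a) = ψ t - ψ τ := by rw [hT]; ring
        have hp := hpos τ
        simp only
        rw [hd.deriv, e, abs_of_pos hp, smul_eq_mul]
        field_simp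
      rw [this, MeasureTheory.integral_const_mul, ← hcv, hu x t, ← hT]
      field_simp
    rw [hcap]
    have hd1 : deriv (fun y => u y t) = fun y => -(π * Real.sin (π * y)) * ML α (L * T ^ α) := by
      funext y
      have h0 : HasDerivAt (fun y : ℝ => π * y) π y := by
        simpa using (hasDerivAt_id y).const_mul π
      have h1 := h0.cos.mul_const (ML α (L * T ^ α))
      have e : (fun y => u y t) = fun y => Real.cos (π * y) * ML α (L * T ^ α) := by
        funext y; exact hu y t
      rw [e, h1.deriv]; ring
    have hd2 : deriv (deriv (fun y => u y t)) x = -(π ^ 2 * Real.cos (π * x)) * ML α (L * T ^ α) := by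
      rw [hd1]
      have h0 : HasDerivAt (fun y : ℝ => π * y) π x := by
        simpa using (hasDerivAt_id x).const_mul π
      have h1 := ((h0.sin.const_mul π).neg).mul_const (ML α (L * T ^ α))
      refine h1.deriv.trans ?_
      ring
    rw [hd2, hu x t, ← hT, hL]
    ring
  · intro x
    rw [hu x a, sub_self, Real.zero_rpow hα.ne', mul_zero, ML]
    rw [tsum_eq_single 0 (by intro m hm; simp [hm])]
    simp
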